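/- There exists a widely digitally delicate prime in base 11; that is, there exists a prime p such that for every natural number i and every digit d ∈ {0, 1, ..., 10} with d ≠ digit_i(p), where digit_i(p) denotes the i-th base-11 digit of p (counting from the least significant digit, i = 0, with digit_i(p) = 0 for all i at or beyond the number of base-11 digits of p, i.e., leading zeros), the number p + (d − digit_i(p))·11^i obtained by replacing the i-th base-11 digit of p (including leading zeros) with d is not prime. -/

import Mathlib

/-- The i-th base-11 digit (from the least significant, starting at i = 0) of n;
for i at or beyond the number of base-11 digits of n this is 0 (a leading zero). -/
def digit (n i : ℕ) : ℕ := n / 11 ^ i % 11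

/-!
Changing a base-`b` digit of `p` at position `i` adds `k * b ^ i` to `p`, where `0 < |k| < b`. If
`q ∣ p + k * b ^ a`, then `q ∣ p + k * b ^ i` for every `i` congruent to `a` modulo the order of
`b` modulo `q`. So it suffices to find, for each `k`, finitely many such classes that cover `ℕ`, in
such a way that the conditions imposed on `p` have pairwise coprime moduli `q`; Dirichlet's theorem
then provides the prime `p`. The changed number could still equal `q`. For large `p` this is only
possible at a position `i ≥ e`, and is then excluded by a condition on `p` modulo `b ^ e`.
-/

/-- Primes for which changing a single base-`b` digit never yields a prime, where the digits
include the infinitely many leading zeros (`p / b ^ i % b = 0` for large `i`). -/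
def IsWidelyDigitallyDelicate (b p : ℕ) : Prop :=
  p.Prime ∧ ∀ i d : ℕ, d < b → d ≠ p / b ^ i % b →
    ¬ (p - p / b ^ i % b * b ^ i + d * b ^ i).Prime

theorem isWidelyDigitallyDelicate_of_forall_change {b p : ℕ} (hp : p.Prime)
    (hchange : ∀ (k : ℤ) (i n : ℕ), k ≠ 0 → |k| < b → (n : ℤ) = p + k * b ^ i → ¬ n.Prime) :
    IsWidelyDigitallyDelicate b p := by
  refine ⟨hp, fun i d hd hne => ?_⟩
  have digit_lt : p / b ^ i % b < b := Nat.mod_lt _ (by lia)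
  have digit_mul_le : p / b ^ i % b * b ^ i ≤ p :=
    (Nat.mul_le_mul_right _ (Nat.mod_le _ _)).trans (Nat.div_mul_le_self _ _)
  refine hchange (d - (p / b ^ i % b : ℕ)) i _ (by lia) (by rw [abs_lt]; lia) ?_
  rw [Nat.cast_add, Nat.cast_sub digit_mul_le]
  push_cast
  ring

theorem add_mul_pow_ne_of_not_modEq {b e p q : ℕ} {k : ℤ} (hk : |k| < b)
    (hpq : ¬ p ≡ q [MOD b ^ e]) (hlarge : q + b ^ e ≤ p) (i : ℕ) : (p : ℤ) + k * b ^ i ≠ q := by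
  intro heq
  rcases le_or_gt e i with hei | hie
  · have hdvd : ((b ^ e : ℕ) : ℤ) ∣ q - p := by
      rw [← heq, add_sub_cancel_left]
      exact_mod_cast (pow_dvd_pow (b : ℤ) hei).mul_left k
    exact hpq (Int.natCast_modEq_iff.mp (Int.modEq_iff_dvd.mpr hdvd))
  · have hb : 0 < (b : ℤ) := (abs_nonneg k).trans_lt hk
    have change_lt : -(k * (b : ℤ) ^ i) < b ^ e := calc
      -(k * (b : ℤ) ^ i) = -k * b ^ i := by ring
      _ ≤ |k| * b ^ i := by gcongr; exact neg_le_abs k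
      _ < b * b ^ i := by gcongr
      _ = b ^ (i + 1) := (pow_succ' _ _).symm
      _ ≤ b ^ e := pow_le_pow_right₀ hb hie
    have : (q : ℤ) + b ^ e ≤ p := mod_cast hlarge
    linarith

theorem exists_prime_gt_and_forall_mem_modEq (l : List (ℤ × ℕ))
    (hpos : ∀ x ∈ l, 0 < x.2) (hunit : ∀ x ∈ l, IsCoprime x.1 (x.2 : ℤ))
    (hcoprime : l.Pairwise fun x y => x.2.Coprime y.2) (N : ℕ) :
    ∃ p > N, p.Prime ∧ ∀ x ∈ l, p ≡ x.1 [ZMOD x.2] := by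
  obtain ⟨r, hr⟩ : ∃ r : ℕ, ∀ x ∈ l, r ≡ x.1 [ZMOD x.2] := by
    obtain ⟨r, hr⟩ := Nat.chineseRemainderOfList (fun x => (x.1 % x.2).toNat) Prod.snd l hcoprime
    refine ⟨r, fun x hx => (Int.natCast_modEq_iff.mpr (hr x hx)).trans ?_⟩
    rw [Int.toNat_of_nonneg (Int.emod_nonneg _ (mod_cast (hpos x hx).ne'))]
    exact Int.mod_modEq _ _
  have hprod : (l.map Prod.snd).prod ≠ 0 := by
    simpa [List.prod_eq_zero_iff] using fun a h => (hpos _ h).ne' rfl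
  have hrprod : r.Coprime (l.map Prod.snd).prod := by
    refine Nat.coprime_list_prod_right_iff.mpr (List.forall_mem_map.mpr fun x hx => ?_)
    rw [← Nat.isCoprime_iff_coprime]
    obtain ⟨c, hc⟩ := (hr x hx).symm.dvd
    rw [sub_eq_iff_eq_add.mp hc, add_comm]
    exact (hunit x hx).add_mul_left_left c
  obtain ⟨p, hpN, hp, hpr⟩ := Nat.forall_exists_prime_gt_and_modEq N hprod hrprod
  have hpr' := (Nat.modEq_list_map_prod_iff hcoprime).mp hpr
  exact ⟨p, hpN, hp, fun x hx => (Int.natCast_modEq_iff.mpr (hpr' x hx)).trans (hr x hx)⟩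

/-- The condition `modulus ∣ p + change * b ^ position` on a number `p` written in base `b`: it
makes one change of the digit at one position, and hence at periodically many, produce a multiple
of `modulus`. -/
structure Trap where
  modulus : ℕ
  change : ℤ
  position : ℕ

namespace Trap

/-- The residue modulo `t.modulus` that the trap `t` prescribes. As in `Trap.Catches`, the power is
taken in `ℕ`, where the kernel evaluates it by binary arithmetic. -/
def residue (b : ℕ) (t : Trap) : ℤ := -(t.change * (b ^ t.position : ℕ))

/-- The trap `t` catches the change `k` at position `i` if `t.modulus` divides `p + k * b ^ i`
for every `p` subject to the condition `t`. -/
def Catches (b : ℕ) (t : Trap) (k : ℤ) (i : ℕ) : Prop :=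
  k * (b ^ i : ℕ) ≡ t.change * (b ^ t.position : ℕ) [ZMOD t.modulus]

instance (b : ℕ) (t : Trap) (k : ℤ) (i : ℕ) : Decidable (t.Catches b k i) :=
  inferInstanceAs (Decidable (_ ≡ _ [ZMOD _]))

variable {b : ℕ} {t : Trap} {k : ℤ}

theorem Catches.dvd_add {p : ℤ} {i : ℕ} (h : t.Catches b k i)
    (hp : p ≡ t.residue b [ZMOD t.modulus]) : (t.modulus : ℤ) ∣ p + k * b ^ i := by
  have hsum := hp.add h
  rw [residue, neg_add_cancel] at hsum
  exact_mod_cast Int.modEq_zero_iff_dvd.mp hsum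

theorem Catches.of_mod {N i : ℕ} (h : t.Catches b k (i % N))
    (hN : b ^ N ≡ 1 [MOD t.modulus]) : t.Catches b k i := by
  have hN' : (b : ZMod t.modulus) ^ N = 1 := mod_cast (ZMod.natCast_eq_natCast_iff _ _ _).mpr hN
  have hpow : b ^ i ≡ b ^ (i % N) [MOD t.modulus] :=
    (ZMod.natCast_eq_natCast_iff _ _ _).mp (mod_cast pow_eq_pow_mod i hN')
  exact ((Int.natCast_modEq_iff.mpr hpow).mul_left k).trans h

end Trap

/-- Every nonzero change of a base-`b` digit is caught at every position by a member of `T`. -/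
def IsCovering (b : ℕ) (T : List Trap) : Prop :=
  ∀ k : ℤ, k ≠ 0 → |k| < b → ∀ i : ℕ, ∃ t ∈ T, t.Catches b k i

theorem IsCovering.isWidelyDigitallyDelicate {b e p : ℕ} {T : List Trap} (hT : IsCovering b T)
    (hp : p.Prime) (hone : ∀ t ∈ T, t.modulus ≠ 1)
    (hres : ∀ t ∈ T, p ≡ t.residue b [ZMOD t.modulus])
    (havoid : ∀ t ∈ T, ¬ p ≡ t.modulus [MOD b ^ e]) (hlarge : ∀ t ∈ T, t.modulus + b ^ e ≤ p) :
    IsWidelyDigitallyDelicate b p := by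
  refine isWidelyDigitallyDelicate_of_forall_change hp fun k i n hk0 hkb hn hnprime => ?_
  obtain ⟨t, ht, hcatch⟩ := hT k hk0 hkb i
  have hdvd : t.modulus ∣ n := by
    rw [← Int.natCast_dvd_natCast, hn]
    exact hcatch.dvd_add (hres t ht)
  have heq : t.modulus = n := ((Nat.dvd_prime hnprime).mp hdvd).resolve_left (hone t ht)
  exact add_mul_pow_ne_of_not_modEq hkb (havoid t ht) (hlarge t ht) i (by rw [← hn, heq])

theorem IsCovering.exists_gt_isWidelyDigitallyDelicate {b e s : ℕ} {T : List Trap}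
    (hT : IsCovering b T) (hb : 0 < b) (hone : ∀ t ∈ T, 1 < t.modulus)
    (hunit : ∀ t ∈ T, IsCoprime (t.residue b) (t.modulus : ℤ))
    (hcoprime : T.Pairwise fun t u => t.modulus.Coprime u.modulus)
    (hbcoprime : ∀ t ∈ T, b.Coprime t.modulus) (hs : s.Coprime b)
    (havoid : ∀ t ∈ T, ¬ s ≡ t.modulus [MOD b ^ e]) (N : ℕ) :
    ∃ p > N, IsWidelyDigitallyDelicate b p := by
  obtain ⟨p, hpN, hp, hmod⟩ := exists_prime_gt_and_forall_mem_modEq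
    (((s : ℤ), b ^ e) :: T.map fun t => (t.residue b, t.modulus))
    (List.forall_mem_cons.mpr ⟨pow_pos hb e, List.forall_mem_map.mpr fun t ht =>
      zero_lt_one.trans (hone t ht)⟩)
    (List.forall_mem_cons.mpr ⟨Nat.isCoprime_iff_coprime.mpr (hs.pow_right e),
      List.forall_mem_map.mpr hunit⟩)
    (List.pairwise_cons.mpr ⟨List.forall_mem_map.mpr fun t ht => (hbcoprime t ht).pow_left e,
      List.pairwise_map.mpr hcoprime⟩)
    (N + (T.map Trap.modulus).sum + b ^ e)
  obtain ⟨hps, hres⟩ := List.forall_mem_cons.mp hmod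
  have hps' : p ≡ s [MOD b ^ e] := Int.natCast_modEq_iff.mp hps
  refine ⟨p, by lia, hT.isWidelyDigitallyDelicate hp (fun t ht => (hone t ht).ne')
    (List.forall_mem_map.mp hres) (fun t ht h => havoid t ht (hps'.symm.trans h)) fun t ht => ?_⟩
  have hle := List.le_sum_of_mem (List.mem_map_of_mem (f := Trap.modulus) ht)
  lia

/-- A test whether the traps in `T` catch the change `k` at all positions in the class of `a` modulo
`N`: the class is split into `f` classes modulo `N * f`, where `f` is the head of the list, and each
of them has to be caught by a single trap or to pass the test for the remaining factors. A trap
with `b ^ (N * f) ≡ 1` that misses one of these classes misses it at every position, so only the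
other traps are passed on. -/
def coversBySplitting (b : ℕ) (k : ℤ) : List ℕ → List Trap → ℕ → ℕ → Bool
  | [], _, _, _ => false
  | f :: fs, T, N, a => (List.range f).all fun c =>
    (T.filter fun t => b ^ (N * f) ≡ 1 [MOD t.modulus]).any (fun t => t.Catches b k (a + N * c)) ||
      coversBySplitting b k fs (T.filter fun t => ¬ b ^ (N * f) ≡ 1 [MOD t.modulus])
        (N * f) (a + N * c)

theorem exists_catches_of_coversBySplitting {b : ℕ} {k : ℤ} {fs : List ℕ} (hfs : 0 ∉ fs)
    {T : List Trap} {N i : ℕ} (h : coversBySplitting b k fs T N (i % N)) :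
    ∃ t ∈ T, t.Catches b k i := by
  induction fs generalizing T N with
  | nil => simp [coversBySplitting] at h
  | cons f fs ih =>
    obtain ⟨hf, hfs⟩ := List.ne_and_not_mem_of_not_mem_cons hfs
    have hsplit := List.all_eq_true.mp h (i / N % f)
      (List.mem_range.mpr (Nat.mod_lt _ (Nat.pos_of_ne_zero hf.symm)))
    rw [← Nat.mod_mul, Bool.or_eq_true, List.any_eq_true] at hsplit
    rcases hsplit with ⟨t, ht, hcatch⟩ | hrest
    · obtain ⟨htT, hperiod⟩ := List.mem_filter.mp ht
      exact ⟨t, htT, (of_decide_eq_true hcatch).of_mod (of_decide_eq_true hperiod)⟩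
    · obtain ⟨t, ht, hcatch⟩ := ih hfs hrest
      exact ⟨t, List.mem_of_mem_filter ht, hcatch⟩

/-- The traps for base 11. Their moduli are divisors of `11 ^ 5040 - 1`, not all of them prime,
sorted by the order of `11` modulo them. -/
def base11Traps : List Trap :=
  [⟨2, 1, 0⟩, ⟨5, 4, 0⟩, ⟨3, 2, 0⟩, ⟨7, -2, 0⟩, ⟨19, 6, 0⟩, ⟨61, 2, 1⟩, ⟨3221, 8, 0⟩, ⟨37, 10, 0⟩,
   ⟨43, 6, 6⟩, ⟨45319, 6, 2⟩, ⟨7321, 2, 3⟩, ⟨1772893, -2, 5⟩, ⟨13421, -8, 2⟩, ⟨13, -2, 10⟩,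
   ⟨1117, -10, 1⟩, ⟨1623931, -8, 2⟩, ⟨195019441, 8, 11⟩, ⟨17, 2, 15⟩, ⟨6304673, 2, 7⟩,
   ⟨590077, -2, 8⟩, ⟨212601841, -8, 0⟩, ⟨1723, 6, 19⟩, ⟨8527, 6, 7⟩, ⟨27763, 6, 4⟩, ⟨10657, -2, 16⟩,
   ⟨20113, -4, 9⟩, ⟨29, -2, 18⟩, ⟨1933, 10, 26⟩, ⟨55527473, 10, 6⟩, ⟨31, -8, 6⟩, ⟨7537711, 8, 1⟩,
   ⟨211, -8, 24⟩, ⟨42437717969530394595211, 8, 28⟩, ⟨3138426605161, -4, 23⟩, ⟨41, -8, 10⟩,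
   ⟨1120648576818041, 8, 9⟩, ⟨3421169496361, 10, 38⟩, ⟨9842332430037465033595921, -2, 20⟩,
   ⟨97, -2, 4⟩, ⟨241, -4, 41⟩, ⟨1777, -2, 28⟩, ⟨1106131489, -4, 29⟩, ⟨113, 6, 29⟩, ⟨449, 10, 0⟩,
   ⟨2521, 10, 48⟩, ⟨77001139434480073, -4, 45⟩, ⟨46329453543600481, 8, 59⟩, ⟨127, -2, 20⟩,
   ⟨8317, 6, 52⟩, ⟨867259, 6, 31⟩, ⟨106431697, 6, 1⟩, ⟨316825425410373433, 6, 10⟩, ⟨71, 8, 13⟩,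
   ⟨7561, -8, 8⟩, ⟨17011, 8, 33⟩, ⟨1649341, -8, 18⟩, ⟨10047871, 8, 3⟩, ⟨73, -4, 47⟩,
   ⟨40177, -4, 71⟩, ⟨3358335487319458201, -4, 35⟩, ⟨5281, 8, 79⟩,
   ⟨399806412551699044818733915681, 8, 29⟩, ⟨19069, 10, 44⟩, ⟨520799717831587692709, 10, 14⟩,
   ⟨181, 8, 9⟩, ⟨631, -2, 38⟩, ⟨86306335830799838011, -2, 56⟩, ⟨540751, -2, 14⟩, ⟨599551, -2, 89⟩,
   ⟨2598121, -8, 19⟩, ⟨126713791, -2, 44⟩, ⟨2373141440024702184811, -2, 29⟩, ⟨337, -4, 109⟩,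
   ⟨394129, 10, 20⟩, ⟨3090443962383595123379137, -4, 29⟩, ⟨52020741601, 8, 109⟩,
   ⟨40589999671017742452961, -8, 70⟩, ⟨3304981, 10, 32⟩, ⟨468843103, -2, 38⟩, ⟨71596275661, 10, 74⟩,
   ⟨278853374647, 6, 106⟩, ⟨2970941, -8, 98⟩,
   ⟨32925268156330499785365829732750601117816501, -8, 14⟩, ⟨110161, 8, 21⟩, ⟨331921, -4, 11⟩,
   ⟨2653299576575651630603169124592864247361, -4, 83⟩, ⟨201407641, -4, 69⟩, ⟨70107576001, 10, 68⟩,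
   ⟨6871280144418624289685328789001, 10, 140⟩, ⟨9001, -8, 174⟩, ⟨16921, -8, 84⟩, ⟨22501, -2, 2⟩,
   ⟨28309390942693823829766228460785185421, -2, 92⟩, ⟨275310421, -8, 4⟩, ⟨137031343051, -8, 64⟩,
   ⟨2359101627084759668315785103671, -8, 34⟩, ⟨3121, 8, 149⟩, ⟨114001, -8, 150⟩,
   ⟨1698371041, 8, 39⟩, ⟨7377289841763386196274521095431949762000607324961, 8, 199⟩, ⟨2017, 6, 169⟩,
   ⟨21673, 6, 148⟩, ⟨21859923981073423323796488634445867249328304474334535293672648146921, 6, 22⟩,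
   ⟨281, -2, 4⟩, ⟨
 33498172693966456110917622231855841927746351803531652987224367452516926726862368795636234633815401,
    -2, 144⟩,
   ⟨52081, -4, 285⟩,
   ⟨1434314770769195889214711370460568929588066931819805395534836149377719672272587199862890401,
    -4, 189⟩]

theorem isCovering_base11Traps : IsCovering 11 base11Traps := by
  intro k hk0 hk i
  have hcovers : ∀ k : ℤ, -10 ≤ k → k ≤ 10 → k ≠ 0 →
      coversBySplitting 11 k [2, 2, 3, 2, 2, 5, 7, 3] base11Traps 1 0 := by
    decide +kernel
  rw [abs_lt] at hk
  have hstart := hcovers k (by lia) (by lia) hk0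
  rw [← Nat.mod_one i] at hstart
  exact exists_catches_of_coversBySplitting (by decide) hstart

theorem one_lt_modulus_of_mem_base11Traps : ∀ t ∈ base11Traps, 1 < t.modulus := by
  decide +kernel

theorem pairwise_coprime_base11Traps :
    base11Traps.Pairwise fun t u => t.modulus.Coprime u.modulus := by
  decide +kernel

theorem coprime_modulus_of_mem_base11Traps : ∀ t ∈ base11Traps, (11).Coprime t.modulus := by
  decide +kernel

theorem isCoprime_residue_of_mem_base11Traps :
    ∀ t ∈ base11Traps, IsCoprime (t.residue 11) (t.modulus : ℤ) := by
  simp only [Int.isCoprime_iff_gcd_eq_one]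
  decide +kernel

theorem not_eight_modEq_modulus_of_mem_base11Traps :
    ∀ t ∈ base11Traps, ¬ 8 ≡ t.modulus [MOD 11 ^ 2] := by
  decide +kernel

theorem exists_widely_digitally_delicate_base_11_general (N : ℕ) :
    ∃ p > N, IsWidelyDigitallyDelicate 11 p :=
  isCovering_base11Traps.exists_gt_isWidelyDigitallyDelicate (by norm_num)
    one_lt_modulus_of_mem_base11Traps isCoprime_residue_of_mem_base11Traps
    pairwise_coprime_base11Traps coprime_modulus_of_mem_base11Traps (by norm_num)
    not_eight_modEq_modulus_of_mem_base11Traps N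

/-- There exists a widely digitally delicate prime in base 11: a prime p such
that replacing any one of its base-11 digits, including any of its leading
zeros, by a different digit in {0, ..., 10} yields a number that is not prime. -/
theorem exists_widely_digitally_delicate_base_11 :
    ∃ p : ℕ, Nat.Prime p ∧
      ∀ i : ℕ, ∀ d : ℕ, d ≤ 10 → d ≠ digit p i →
        ¬ Nat.Prime (p - digit p i * 11 ^ i + d * 11 ^ i) := by
  obtain ⟨p, -, hp, hdelicate⟩ := exists_widely_digitally_delicate_base_11_general 0
  exact ⟨p, hp, fun i d hd => hdelicate i d (Nat.lt_succ_of_le hd)⟩
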